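/- arXiv:1304.3869 — 2 statements merged into one kernel-verified Lean document; each statement's English description precedes it below -/
import Mathlib

section
/- For integers b and N with N ≥ 1 and N not dividing b, the limit as s → 1⁺ of (∑_{n≥1, n≡b mod N} 1/n^s − ∑_{n≥1, n≡-b mod N} 1/n^s) equals (1/N)·(ψ(1−{b/N}) − ψ({b/N})), which equals (π/N)·cot(πb/N). -/
open Real Filter

/-- The digamma function `ψ = Γ'/Γ`. -/
noncomputable def digamma (x : ℝ) : ℝ := deriv Real.Gamma x / Real.Gamma x

/-- The reflection formula for the digamma function. -/
lemma digamma_one_sub_sub_digamma {x : ℝ} (hx0 : 0 < x) (hx1 : x < 1) :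
    digamma (1 - x) - digamma x = π * Real.cot (π * x) := by
  have hdiff : ∀ y : ℝ, 0 < y → DifferentiableAt ℝ Real.Gamma y := fun y hy =>
    Real.differentiableAt_Gamma fun m => by
      have := Nat.cast_nonneg (α := ℝ) m
      linarith
  have hsin : sin (π * x) ≠ 0 :=
    (sin_pos_of_pos_of_lt_pi (by positivity) (by nlinarith [pi_pos])).ne'
  have hΓ := (Gamma_pos_of_pos hx0).ne'
  have hΓ' := (Gamma_pos_of_pos (sub_pos.2 hx1)).ne'
  have hleft : HasDerivAt (fun y => Gamma y * Gamma (1 - y))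
      (deriv Gamma x * Gamma (1 - x) + Gamma x * (deriv Gamma (1 - x) * -1)) x :=
    (hdiff x hx0).hasDerivAt.mul <|
      (hdiff (1 - x) (sub_pos.2 hx1)).hasDerivAt.comp x ((hasDerivAt_id x).const_sub 1)
  have hright : HasDerivAt (fun y => π / sin (π * y))
      ((0 * sin (π * x) - π * (cos (π * x) * (π * 1))) / sin (π * x) ^ 2) x :=
    (hasDerivAt_const x π).div (((hasDerivAt_id x).const_mul π).sin) hsin
  have heq : (fun y : ℝ => Gamma y * Gamma (1 - y)) = fun y => π / sin (π * y) :=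
    funext Gamma_mul_Gamma_one_sub
  rw [heq] at hleft
  have hder := hleft.unique hright
  have hval := Gamma_mul_Gamma_one_sub x
  have hlog : digamma (1 - x) - digamma x =
      -(deriv Gamma x * Gamma (1 - x) + Gamma x * (deriv Gamma (1 - x) * -1)) /
        (Gamma x * Gamma (1 - x)) := by
    unfold digamma
    field_simp
    ring
  rw [hlog, hder, hval, cot_eq_cos_div_sin]
  field_simp
  ring

/-- A bound, uniform in `1 ≤ s ≤ 2`, for the difference of two values of `y ↦ 1 / y ^ s`. -/
lemma abs_one_div_rpow_sub_one_div_rpow_le {c t u v s : ℝ} (hc0 : 0 < c) (hc1 : c ≤ 1)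
    (ht : 1 ≤ t) (hu : c * t ≤ u) (hv : c * t ≤ v) (huv : |u - v| ≤ 1) (hs1 : 1 ≤ s)
    (hs2 : s ≤ 2) :
    |1 / u ^ s - 1 / v ^ s| ≤ 2 / c ^ 3 * (1 / t ^ 2) := by
  wlog h : u ≤ v generalizing u v
  · rw [abs_sub_comm]
    exact this hv hu (by rwa [abs_sub_comm]) (le_of_not_ge h)
  have ht0 : 0 < t := by linarith
  have hct : 0 < c * t := by positivity
  have hu0 : 0 < u := by linarith
  have hv0 : 0 < v := by linarith
  have hgap : v - u ≤ 1 := by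
    rw [abs_sub_comm] at huv
    exact (le_abs_self _).trans huv
  have hpow : 1 / u ^ s ≤ 1 / (c ^ 2 * t) := by
    apply one_div_le_one_div_of_le (by positivity)
    calc c ^ 2 * t ≤ c ^ s * t ^ s := by
          gcongr
          · rw [← rpow_two]
            exact rpow_le_rpow_of_exponent_ge hc0 hc1 hs2
          · exact self_le_rpow_of_one_le ht hs1
      _ = (c * t) ^ s := (mul_rpow hc0.le ht0.le).symm
      _ ≤ u ^ s := by gcongr
  have hratio : 1 - u ^ s / v ^ s ≤ 2 / (c * t) := by
    have hlow : (u / v) ^ 2 ≤ u ^ s / v ^ s := by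
      rw [← div_rpow hu0.le hv0.le, ← rpow_two]
      exact rpow_le_rpow_of_exponent_ge (by positivity) ((div_le_one hv0).2 h) hs2
    have hq : 1 - u / v ≤ 1 / (c * t) := by
      calc 1 - u / v = (v - u) / v := by field_simp
        _ ≤ 1 / (c * t) := by gcongr
    have htwo : 2 / (c * t) = 2 * (1 / (c * t)) := by ring
    nlinarith [sq_nonneg (1 - u / v)]
  have hratio0 : 0 ≤ 1 - u ^ s / v ^ s := by
    rw [sub_nonneg, div_le_one (by positivity)]
    gcongr
  have hsplit : 1 / u ^ s - 1 / v ^ s = 1 / u ^ s * (1 - u ^ s / v ^ s) := by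
    have : u ^ s ≠ 0 := by positivity
    field_simp
  rw [hsplit, abs_of_nonneg (by positivity)]
  calc 1 / u ^ s * (1 - u ^ s / v ^ s) ≤ 1 / (c ^ 2 * t) * (2 / (c * t)) := by gcongr
    _ = 2 / c ^ 3 * (1 / t ^ 2) := by field_simp

/-- A summable majorant, uniform in `1 ≤ s ≤ 2`, for the series
`∑ (1 / (k + x) ^ s - 1 / (k + (1 - x)) ^ s)`. -/
lemma exists_summable_bound_hurwitz_difference {x : ℝ} (hx0 : 0 < x) (hx1 : x < 1) :
    ∃ g : ℕ → ℝ, Summable g ∧ ∀ s : ℝ, 1 ≤ s → s ≤ 2 → ∀ k : ℕ,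
      |1 / (k + x) ^ s - 1 / (k + (1 - x)) ^ s| ≤ g k := by
  have hc0 : 0 < min x (1 - x) := lt_min hx0 (sub_pos.2 hx1)
  have hcx : min x (1 - x) ≤ x := min_le_left _ _
  have hcx' : min x (1 - x) ≤ 1 - x := min_le_right _ _
  refine ⟨fun k => 2 / min x (1 - x) ^ 3 * (1 / ((k : ℝ) + 1) ^ 2), ?_, fun s hs1 hs2 k => ?_⟩
  · apply Summable.mul_left
    have := (summable_nat_add_iff 1).2 (Real.summable_one_div_nat_pow.2 one_lt_two)
    simpa using this
  · have hk : (0 : ℝ) ≤ k := k.cast_nonneg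
    refine abs_one_div_rpow_sub_one_div_rpow_le hc0 (by linarith) (by linarith) ?_ ?_ ?_ hs1 hs2
    · nlinarith
    · nlinarith
    · rw [abs_le]
      constructor <;> linarith

/-- The partial fraction expansion of the cotangent, with its terms paired as
`1 / (k + x) - 1 / (k + (1 - x))`. -/
lemma hasSum_cot {x : ℝ} (hx0 : 0 < x) (hx1 : x < 1) :
    HasSum (fun k : ℕ => 1 / (k + x) - 1 / (k + (1 - x))) (π * Real.cot (π * x)) := by
  obtain ⟨g, hg, hbound⟩ := exists_summable_bound_hurwitz_difference hx0 hx1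
  have hsum : Summable fun k : ℕ => 1 / (k + x) - 1 / (k + (1 - x)) :=
    hg.of_norm_bounded fun k => by simpa using hbound 1 le_rfl one_le_two k
  rw [hsum.hasSum_iff_tendsto_nat]
  have hxc : (x : ℂ) ∈ Complex.integerComplement := by
    rintro ⟨n, hn⟩
    have hn' : (n : ℝ) = x := by exact_mod_cast hn
    rw [← hn'] at hx0 hx1
    norm_cast at hx0 hx1
    omega
  have hcot : Tendsto (fun n : ℕ => ∑ j ∈ Finset.range n,
      (1 / (x - (j + 1)) + 1 / (x + (j + 1)))) atTop (nhds (π * Real.cot (π * x) - 1 / x)) := by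
    have := (Complex.continuous_re.tendsto _).comp (tendsto_logDeriv_euler_cot_sub hxc)
    convert this using 2
    · rename_i n
      have : (∑ j ∈ Finset.range n, cotTerm (x : ℂ) j) =
          ((∑ j ∈ Finset.range n, (1 / (x - (j + 1)) + 1 / (x + (j + 1))) : ℝ) : ℂ) := by
        push_cast
        rfl
      simp only [Function.comp_apply]
      rw [this, Complex.ofReal_re]
    · have : (π : ℂ) * Complex.cot (π * x) - 1 / x =
          ((π * Real.cot (π * x) - 1 / x : ℝ) : ℂ) := by
        push_cast
        rfl
      rw [this, Complex.ofReal_re]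
  have hpartial : ∀ n : ℕ, ∑ k ∈ Finset.range n, (1 / (k + x) - 1 / (k + (1 - x))) =
      1 / x + ∑ j ∈ Finset.range n, (1 / (x - (j + 1)) + 1 / (x + (j + 1))) - 1 / (n + x) := by
    intro n
    induction n with
    | zero => simp
    | succ n ih =>
      rw [Finset.sum_range_succ, Finset.sum_range_succ, ih]
      have hneg : 1 / (x - (n + 1)) = -(1 / (n + (1 - x))) := by
        rw [← one_div_neg_eq_neg_one_div]
        congr 1
        ring
      rw [hneg]
      push_cast
      ring
  simp_rw [hpartial]
  have hlast : Tendsto (fun n : ℕ => 1 / ((n : ℝ) + x)) atTop (nhds 0) :=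
    (tendsto_atTop_add_const_right _ x tendsto_natCast_atTop_atTop).const_div_atTop 1
  convert (hcot.const_add (1 / x)).sub hlast using 2
  ring

/-- The difference of the Hurwitz series at `x` and `1 - x` tends to `π cot (π x)` at `1`. -/
lemma tendsto_tsum_hurwitz_difference {x : ℝ} (hx0 : 0 < x) (hx1 : x < 1) :
    Tendsto (fun s : ℝ => ∑' k : ℕ, (1 / (k + x) ^ s - 1 / (k + (1 - x)) ^ s))
      (nhdsWithin 1 (Set.Ioi 1)) (nhds (π * Real.cot (π * x))) := by
  obtain ⟨g, hg, hbound⟩ := exists_summable_bound_hurwitz_difference hx0 hx1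
  rw [← (hasSum_cot hx0 hx1).tsum_eq]
  refine tendsto_tsum_of_dominated_convergence hg (fun k => ?_) ?_
  · have hk : (0 : ℝ) ≤ k := k.cast_nonneg
    have hterm : ∀ y : ℝ, 0 < y → ContinuousAt (fun s : ℝ => 1 / y ^ s) 1 := fun y hy =>
      continuousAt_const.div (continuousAt_const_rpow hy.ne') (by positivity)
    have := ((hterm (k + x) (by linarith)).sub (hterm (k + (1 - x)) (by linarith))).tendsto
    simp only [Pi.sub_apply, rpow_one] at this
    exact this.mono_left nhdsWithin_le_nhds
  · filter_upwards [Ioc_mem_nhdsGT (one_lt_two (α := ℝ))] with s hs k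
    exact hbound s hs.1.le hs.2 k

/-- A Dirichlet series over a residue class, as a Hurwitz series. -/
lemma tsum_residue_class_eq {a N : ℤ} {r : ℕ} (hr0 : 0 < r) (hrN : (r : ℤ) < N)
    (hra : (r : ℤ) ≡ a [ZMOD N]) (s : ℝ) :
    (∑' n : ℕ+, if (n : ℤ) ≡ a [ZMOD N] then 1 / (n : ℝ) ^ s else 0) =
      1 / (N : ℝ) ^ s * ∑' k : ℕ, 1 / (k + (r : ℝ) / N) ^ s := by
  lift N to ℕ using by omega
  have hN : 0 < N := by omega
  have hNR : (0 : ℝ) < N := by exact_mod_cast hN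
  let e : ℕ → ℕ+ := fun k => ⟨r + k * N, by positivity⟩
  have he : Function.Injective e := fun i j hij => by
    have := congrArg PNat.val hij
    exact Nat.eq_of_mul_eq_mul_right hN (Nat.add_left_cancel this)
  rw [← he.tsum_eq, ← tsum_mul_left]
  · refine tsum_congr fun k => ?_
    have hcong : ((e k : ℕ+) : ℤ) ≡ a [ZMOD N] := by
      refine Int.ModEq.trans ?_ hra
      simp [e, Int.ModEq]
    have hval : ((e k : ℕ+) : ℝ) = N * (k + (r : ℝ) / N) := by
      simp only [e, PNat.mk_coe]
      push_cast
      field_simp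
      ring
    rw [if_pos hcong, hval, mul_rpow hNR.le (by positivity), one_div_mul_one_div]
    rfl
  · intro n hn
    have hmod : (n : ℤ) ≡ a [ZMOD N] := by
      by_contra h
      exact hn (if_neg h)
    have hnr : (n : ℕ) % N = r := by
      have hnr' : ((n : ℕ) : ℤ) ≡ (r : ℕ) [ZMOD N] := hmod.trans hra.symm
      rw [Int.natCast_modEq_iff] at hnr'
      rw [hnr', Nat.mod_eq_of_lt (by exact_mod_cast hrN)]
    refine ⟨(n : ℕ) / N, PNat.eq ?_⟩
    change r + (n : ℕ) / N * N = n
    rw [← hnr, Nat.mod_add_div']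

/-- For integers `b`, `N` with `N ≥ 1` and `N ∤ b`, as `s → 1⁺` the difference of the
Dirichlet series over `n ≡ b (mod N)` and over `n ≡ -b (mod N)` tends to
`(1/N)(ψ(1-{b/N}) - ψ({b/N}))`, which equals `(π/N)·cot(πb/N)`. -/
theorem dirichlet_difference_limit (b N : ℤ) (hN : 1 ≤ N) (hb : ¬ (N ∣ b)) :
    Tendsto
      (fun s : ℝ =>
        (∑' n : ℕ+, if (n : ℤ) ≡ b [ZMOD N] then 1 / (n : ℝ) ^ s else 0) -
          ∑' n : ℕ+, if (n : ℤ) ≡ -b [ZMOD N] then 1 / (n : ℝ) ^ s else 0)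
      (nhdsWithin 1 (Set.Ioi 1))
      (nhds ((1 / N) * (digamma (1 - Int.fract ((b : ℝ) / N)) -
        digamma (Int.fract ((b : ℝ) / N))))) ∧
    (1 / (N : ℝ)) * (digamma (1 - Int.fract ((b : ℝ) / N)) -
        digamma (Int.fract ((b : ℝ) / N))) = (π / N) * Real.cot (π * b / N) := by
  have hNR : (0 : ℝ) < N := by exact_mod_cast hN
  have hmod0 : 0 < b % N :=
    lt_of_le_of_ne (Int.emod_nonneg b (by omega)) fun h => hb (Int.dvd_of_emod_eq_zero h.symm)
  have hmodN : b % N < N := Int.emod_lt_of_pos b (by omega)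
  obtain ⟨r, hr⟩ := Int.eq_ofNat_of_zero_le hmod0.le
  obtain ⟨r', hr'⟩ := Int.eq_ofNat_of_zero_le (sub_pos.2 hmodN).le
  have hdecomp : (b : ℝ) / N = (b / N : ℤ) + (r : ℝ) / N := by
    have h : (r : ℤ) + N * (b / N) = b := by
      rw [← hr]
      exact Int.emod_add_mul_ediv b N
    have h' : (r : ℝ) + N * (b / N : ℤ) = b := by exact_mod_cast h
    rw [← h']
    field_simp
    ring
  have hrN : (r : ℝ) < N := by
    have : (r : ℤ) < N := by omega
    exact_mod_cast this
  have hfract : Int.fract ((b : ℝ) / N) = (r : ℝ) / N := by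
    rw [hdecomp, Int.fract_intCast_add, Int.fract_eq_self]
    exact ⟨by positivity, (div_lt_one hNR).2 hrN⟩
  have hx0 : (0 : ℝ) < r / N := by
    have : (0 : ℝ) < r := by
      have : 0 < r := by omega
      exact_mod_cast this
    positivity
  have hx1 : (r : ℝ) / N < 1 := (div_lt_one hNR).2 hrN
  have hx' : (r' : ℝ) / N = 1 - r / N := by
    have h : (r' : ℤ) = N - r := by omega
    have h' : (r' : ℝ) = N - r := by exact_mod_cast h
    rw [h']
    field_simp
  have hcot : Real.cot (π * b / N) = Real.cot (π * (r / N)) := by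
    have : π * b / N = π * (r / N) + (b / N : ℤ) * π := by
      rw [mul_div_assoc, hdecomp]
      ring
    rw [this, ← tan_inv_eq_cot, ← tan_inv_eq_cot, tan_add_int_mul_pi]
  rw [hfract, digamma_one_sub_sub_digamma hx0 hx1, hcot]
  refine ⟨?_, by ring⟩
  have hrb : (r : ℤ) ≡ b [ZMOD N] := by
    rw [← hr]
    exact Int.mod_modEq b N
  have hrb' : (r' : ℤ) ≡ -b [ZMOD N] := by
    rw [← hr']
    simpa using (Int.ModEq.sub (Int.modEq_zero_iff_dvd.2 (dvd_refl N)) (Int.mod_modEq b N))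
  have hscale : Tendsto (fun s : ℝ => 1 / (N : ℝ) ^ s) (nhdsWithin 1 (Set.Ioi 1))
      (nhds (1 / N)) := by
    have : ContinuousAt (fun s : ℝ => 1 / (N : ℝ) ^ s) 1 :=
      continuousAt_const.div (continuousAt_const_rpow hNR.ne') (by positivity)
    have := this.tendsto
    rw [rpow_one] at this
    exact this.mono_left nhdsWithin_le_nhds
  refine (hscale.mul (tendsto_tsum_hurwitz_difference hx0 hx1)).congr' ?_
  filter_upwards [self_mem_nhdsWithin] with s hs
  have hsummable : ∀ y : ℝ, 0 < y → Summable fun k : ℕ => 1 / ((k : ℝ) + y) ^ s := fun y hy =>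
    ((Real.summable_one_div_nat_add_rpow y s).2 hs).congr fun k => by
      rw [abs_of_pos (by positivity)]
  rw [tsum_residue_class_eq (by omega) (by omega) hrb,
    tsum_residue_class_eq (by omega) (by omega) hrb', hx', ← mul_sub,
    (hsummable _ hx0).tsum_sub (hsummable _ (sub_pos.2 hx1))]
end

section
/- For integers a, b not divisible by N, ∫₀^∞ ( e_{a,b}(it) + e_{a,−b}(it) − (1+ζ^a)/(1−ζ^a) ) · t dt = i · Cl₂(2πa/N) · B(b/N), where ζ = exp(2πi/N), Cl₂(x) = ∑_{m≥1} sin(mx)/m², and B(x) = {x}² − {x} + 1/6. -/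
open Real MeasureTheory

/-- Clausen's dilogarithmic function `Cl₂(x) = ∑_{m≥1} sin(mx)/m²`. -/
noncomputable def Cl2 (x : ℝ) : ℝ := ∑' m : ℕ+, Real.sin (m * x) / (m : ℝ) ^ 2

/-- The second Bernoulli polynomial at the fractional part: `B(x) = {x}² - {x} + 1/6`. -/
noncomputable def B2 (x : ℝ) : ℝ := Int.fract x ^ 2 - Int.fract x + 1 / 6

/-- The root of unity `ζ_N = exp(2πi/N)`. -/
noncomputable def zetaN (N : ℤ) : ℂ := Complex.exp (2 * π * Complex.I / N)

/-- The weight-1 Eisenstein series `e_{a,b}` of level `N²` evaluated at `τ = it`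
(so `q = exp(-2πt)`). -/
noncomputable def eisE (N a b : ℤ) (t : ℝ) : ℂ :=
  (1 / 2) * ((1 + zetaN N ^ a) / (1 - zetaN N ^ a) +
      (1 + zetaN N ^ b) / (1 - zetaN N ^ b)) +
    ∑' p : ℕ+ × ℕ+,
      (zetaN N ^ (a * (p.1 : ℤ) + b * (p.2 : ℤ)) -
          zetaN N ^ (-(a * (p.1 : ℤ) + b * (p.2 : ℤ)))) *
        (Real.exp (-(2 * π * t)) : ℂ) ^ ((p.1 : ℕ) * (p.2 : ℕ))

lemma zetaN_zpow (N k : ℤ) :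
    zetaN N ^ k = Complex.exp ((2 * π * k / N : ℝ) * Complex.I) := by
  rw [zetaN, ← Complex.exp_int_mul]
  congr 1
  push_cast
  ring

lemma one_add_inv_div_one_sub_inv {w : ℂ} (hw : w ≠ 0) :
    (1 + w⁻¹) / (1 - w⁻¹) = -((1 + w) / (1 - w)) := by
  rw [← mul_div_mul_left _ _ hw, mul_add, mul_sub, mul_inv_cancel₀ hw, mul_one, ← div_neg]
  congr 1 <;> ring

lemma zetaN_ne_zero (N : ℤ) : zetaN N ≠ 0 := Complex.exp_ne_zero _

/-- The Fourier coefficients of `e_{a,b} + e_{a,-b}`. -/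
lemma zetaN_coeff_add_coeff_neg (N a b m n : ℤ) :
    (zetaN N ^ (a * m + b * n) - zetaN N ^ (-(a * m + b * n))) +
      (zetaN N ^ (a * m + -b * n) - zetaN N ^ (-(a * m + -b * n))) =
    4 * Complex.I * ((Real.sin (m * (2 * π * a / N)) * Real.cos (2 * π * n * (b / N)) : ℝ) : ℂ) := by
  simp only [zetaN_zpow]
  rw [show (2 * π * (a * m + b * n : ℤ) / N : ℝ) =
        m * (2 * π * a / N) + 2 * π * n * (b / N) by push_cast; ring,
    show (2 * π * (-(a * m + b * n) : ℤ) / N : ℝ) =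
        -(m * (2 * π * a / N) + 2 * π * n * (b / N)) by push_cast; ring,
    show (2 * π * (a * m + -b * n : ℤ) / N : ℝ) =
        m * (2 * π * a / N) - 2 * π * n * (b / N) by push_cast; ring,
    show (2 * π * (-(a * m + -b * n) : ℤ) / N : ℝ) =
        -(m * (2 * π * a / N) - 2 * π * n * (b / N)) by push_cast; ring]
  generalize (m * (2 * π * a / N) : ℝ) = x
  generalize (2 * π * n * (b / N) : ℝ) = y
  simp only [Complex.exp_mul_I, ← Complex.ofReal_cos, ← Complex.ofReal_sin, Real.cos_neg,
    Real.sin_neg, Real.cos_add, Real.sin_add, Real.cos_sub, Real.sin_sub]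
  push_cast
  ring

lemma summable_pnat_inv_sq : Summable fun n : ℕ+ ↦ ((n : ℝ) ^ 2)⁻¹ :=
  (Real.summable_nat_pow_inv.mpr one_lt_two).comp_injective PNat.coe_injective

lemma summable_pnat_prod_inv_sq :
    Summable fun p : ℕ+ × ℕ+ ↦ (((p.1 : ℝ) * (p.2 : ℝ)) ^ 2)⁻¹ := by
  simpa [mul_pow, mul_comm] using summable_pnat_inv_sq.mul_of_nonneg
    summable_pnat_inv_sq (fun _ ↦ by positivity) (fun _ ↦ by positivity)

lemma summable_exp_pow_mul {t : ℝ} (ht : 0 < t) :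
    Summable fun p : ℕ+ × ℕ+ ↦ Real.exp (-(2 * π * t)) ^ ((p.1 : ℕ) * (p.2 : ℕ)) := by
  refine Summable.of_nonneg_of_le (fun _ ↦ by positivity) (fun p ↦ ?_)
    (summable_pnat_prod_inv_sq.mul_left (2 * ((2 * π * t) ^ 2)⁻¹))
  rw [← Real.exp_nat_mul]
  have h := Real.quadratic_le_exp_of_nonneg
    (x := ((p.1 : ℕ) * (p.2 : ℕ) : ℕ) * (2 * π * t)) (by positivity)
  have h1 : (0 : ℝ) < (p.1 : ℕ) := by exact_mod_cast p.1.pos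
  have h2 : (0 : ℝ) < (p.2 : ℕ) := by exact_mod_cast p.2.pos
  rw [mul_neg, Real.exp_neg]
  push_cast at h ⊢
  rw [show 2 * ((2 * π * t) ^ 2)⁻¹ * (((p.1 : ℝ) * (p.2 : ℝ)) ^ 2)⁻¹ =
    (((p.1 : ℝ) * (p.2 : ℝ) * (2 * π * t)) ^ 2 / 2)⁻¹ by field_simp]
  refine inv_anti₀ (by positivity) (le_trans ?_ h)
  have : (0 : ℝ) ≤ (p.1 : ℝ) * (p.2 : ℝ) * (2 * π * t) := by positivity
  linarith

lemma summable_eisE_terms (N a b : ℤ) {t : ℝ} (ht : 0 < t) :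
    Summable fun p : ℕ+ × ℕ+ ↦
      (zetaN N ^ (a * (p.1 : ℤ) + b * (p.2 : ℤ)) -
          zetaN N ^ (-(a * (p.1 : ℤ) + b * (p.2 : ℤ)))) *
        (Real.exp (-(2 * π * t)) : ℂ) ^ ((p.1 : ℕ) * (p.2 : ℕ)) := by
  refine Summable.of_norm_bounded ((summable_exp_pow_mul ht).mul_left 2) (fun p ↦ ?_)
  rw [norm_mul, norm_pow, Complex.norm_real, Real.norm_of_nonneg (Real.exp_pos _).le]
  gcongr
  refine (norm_sub_le _ _).trans ?_
  simp only [zetaN_zpow, Complex.norm_exp_ofReal_mul_I]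
  norm_num

lemma eisE_add_eisE_neg (N a b : ℤ) {t : ℝ} (ht : 0 < t) :
    eisE N a b t + eisE N a (-b) t - (1 + zetaN N ^ a) / (1 - zetaN N ^ a) =
      ∑' p : ℕ+ × ℕ+, 4 * Complex.I *
        ((Real.sin (p.1 * (2 * π * a / N)) * Real.cos (2 * π * p.2 * (b / N)) : ℝ) : ℂ) *
        (Real.exp (-(2 * π * t)) : ℂ) ^ ((p.1 : ℕ) * (p.2 : ℕ)) := by
  have hterm (p : ℕ+ × ℕ+) := zetaN_coeff_add_coeff_neg N a b (p.1 : ℤ) (p.2 : ℤ)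
  simp only [Int.cast_natCast] at hterm
  simp only [← hterm, add_mul]
  rw [(summable_eisE_terms N a b ht).tsum_add (summable_eisE_terms N a (-b) ht), eisE, eisE,
    zpow_neg (zetaN N) b, one_add_inv_div_one_sub_inv (zpow_ne_zero b (zetaN_ne_zero N))]
  ring

lemma integral_mul_exp_neg_mul {r : ℝ} (hr : 0 < r) :
    ∫ t in Set.Ioi (0 : ℝ), t * Real.exp (-(r * t)) = (r ^ 2)⁻¹ := by
  have h := Real.integral_rpow_mul_exp_neg_mul_Ioi (a := 2) two_pos hr
  norm_num at h
  exact h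

lemma integrableOn_mul_exp_neg_mul {r : ℝ} (hr : 0 < r) :
    IntegrableOn (fun t : ℝ ↦ t * Real.exp (-(r * t))) (Set.Ioi 0) :=
  Integrable.of_integral_ne_zero (by rw [integral_mul_exp_neg_mul hr]; positivity)

lemma tsum_cos_div_sq (x : ℝ) :
    ∑' n : ℕ+, Real.cos (2 * π * n * x) / (n : ℝ) ^ 2 = π ^ 2 * B2 x := by
  have h := hasSum_one_div_nat_pow_mul_cos one_ne_zero
    (x := Int.fract x) ⟨Int.fract_nonneg x, (Int.fract_lt_one x).le⟩
  have hcos (n : ℕ) : Real.cos (2 * π * n * Int.fract x) = Real.cos (2 * π * n * x) := by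
    rw [Int.fract, show 2 * π * n * (x - ⌊x⌋) = 2 * π * n * x - (n * ⌊x⌋ : ℤ) * (2 * π) by
      push_cast; ring, Real.cos_sub_int_mul_two_pi]
  have heval : Polynomial.eval (Int.fract x)
      ((Polynomial.bernoulli (2 * 1)).map (algebraMap ℚ ℝ)) = B2 x := by
    simp [Polynomial.bernoulli, Finset.sum_range_succ, bernoulli_one, bernoulli_two, B2,
      Polynomial.map_monomial, Polynomial.eval_monomial]
    ring
  rw [tsum_pnat_eq_tsum_of_eq_zero (f := fun n : ℕ ↦ Real.cos (2 * π * n * x) / (n : ℝ) ^ 2)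
    (by simp)]
  simp only [hcos, heval] at h
  convert h.tsum_eq using 1
  · refine tsum_congr fun n ↦ ?_
    rw [mul_one, one_div_mul_eq_div]
  · simp only [mul_one, Nat.factorial_two]
    push_cast
    ring

lemma summable_div_sq {f : ℕ+ → ℝ} (hf : ∀ n, |f n| ≤ 1) :
    Summable fun n : ℕ+ ↦ f n / (n : ℝ) ^ 2 := by
  refine summable_pnat_inv_sq.of_norm_bounded fun n ↦ ?_
  rw [norm_div, div_eq_mul_inv, norm_pow, Real.norm_natCast]
  exact mul_le_of_le_one_left (by positivity) (hf n)

/-- For integers `a`, `b` not divisible by `N`,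
`∫₀^∞ (e_{a,b}(it) + e_{a,-b}(it) - (1+ζ^a)/(1-ζ^a)) t dt = i·Cl₂(2πa/N)·B(b/N)`. -/
theorem integral_eisE (N a b : ℤ) (hN : 1 ≤ N) (ha : ¬ (N ∣ a)) (hb : ¬ (N ∣ b)) :
    ∫ t in Set.Ioi (0 : ℝ),
        (eisE N a b t + eisE N a (-b) t -
            (1 + zetaN N ^ a) / (1 - zetaN N ^ a)) * (t : ℂ) =
      Complex.I * (Cl2 (2 * π * a / N) : ℂ) * (B2 ((b : ℝ) / N) : ℂ) := by
  have hpos (p : ℕ+ × ℕ+) : 0 < 2 * π * ((p.1 : ℝ) * (p.2 : ℝ)) := by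
    have h1 : (0 : ℝ) < (p.1 : ℕ) := by exact_mod_cast p.1.pos
    have h2 : (0 : ℝ) < (p.2 : ℕ) := by exact_mod_cast p.2.pos
    positivity
  set c : ℕ+ × ℕ+ → ℝ := fun p ↦
    Real.sin (p.1 * (2 * π * a / N)) * Real.cos (2 * π * p.2 * (b / N)) with hc
  have hc_le (p : ℕ+ × ℕ+) : |c p| ≤ 1 := by
    rw [hc, abs_mul]
    exact mul_le_one₀ (Real.abs_sin_le_one _) (abs_nonneg _) (Real.abs_cos_le_one _)
  set F : ℕ+ × ℕ+ → ℝ → ℝ := fun p t ↦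
    c p * (t * Real.exp (-(2 * π * ((p.1 : ℝ) * (p.2 : ℝ)) * t))) with hF
  have hF_int (p : ℕ+ × ℕ+) : IntegrableOn (F p) (Set.Ioi 0) :=
    (integrableOn_mul_exp_neg_mul (hpos p)).const_mul _
  have hF_integral (p : ℕ+ × ℕ+) : ∫ t in Set.Ioi (0 : ℝ), F p t =
      c p * ((2 * π * ((p.1 : ℝ) * (p.2 : ℝ))) ^ 2)⁻¹ := by
    rw [hF, integral_const_mul, integral_mul_exp_neg_mul (hpos p)]
  have hF_norm (p : ℕ+ × ℕ+) : ∫ t in Set.Ioi (0 : ℝ), ‖F p t‖ =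
      |c p| * ((2 * π * ((p.1 : ℝ) * (p.2 : ℝ))) ^ 2)⁻¹ := by
    rw [← integral_mul_exp_neg_mul (hpos p), ← integral_const_mul]
    refine setIntegral_congr_fun measurableSet_Ioi fun t ht ↦ ?_
    have : 0 ≤ t * Real.exp (-(2 * π * ((p.1 : ℝ) * (p.2 : ℝ)) * t)) :=
      mul_nonneg (le_of_lt ht) (Real.exp_pos _).le
    simp only [hF, norm_mul _ (t * _), Real.norm_of_nonneg this, Real.norm_eq_abs (c p)]
  have hsum : Summable fun p ↦ ∫ t in Set.Ioi (0 : ℝ), ‖F p t‖ := by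
    simp only [hF_norm]
    refine (summable_pnat_prod_inv_sq.mul_left ((2 * π) ^ 2)⁻¹).of_nonneg_of_le
      (fun _ ↦ by positivity) fun p ↦ ?_
    rw [mul_pow _ (_ * _), mul_inv]
    exact mul_le_of_le_one_left (by positivity) (hc_le p)
  have hintegrand : Set.EqOn (fun t : ℝ ↦ (eisE N a b t + eisE N a (-b) t -
      (1 + zetaN N ^ a) / (1 - zetaN N ^ a)) * (t : ℂ))
      (fun t ↦ 4 * Complex.I * ((∑' p, F p t : ℝ) : ℂ)) (Set.Ioi 0) := fun t ht ↦ by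
    simp only [eisE_add_eisE_neg N a b ht]
    rw [← tsum_mul_right, Complex.ofReal_tsum, ← tsum_mul_left]
    refine tsum_congr fun p ↦ ?_
    rw [hF, ← Complex.ofReal_pow, ← Real.exp_nat_mul,
      show (((p.1 : ℕ) * (p.2 : ℕ) : ℕ) * -(2 * π * t) : ℝ) =
        -(2 * π * ((p.1 : ℝ) * (p.2 : ℝ)) * t) by push_cast; ring]
    simp only [hc]
    push_cast
    ring
  have htsum : ∑' p, c p * ((2 * π * ((p.1 : ℝ) * (p.2 : ℝ))) ^ 2)⁻¹ =
      Cl2 (2 * π * a / N) * B2 (b / N) / 4 := by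
    have hprod := tsum_mul_tsum_of_summable_norm
      (summable_div_sq fun m : ℕ+ ↦ Real.abs_sin_le_one (m * (2 * π * a / N))).norm
      (summable_div_sq fun n : ℕ+ ↦ Real.abs_cos_le_one (2 * π * n * (b / N))).norm
    rw [tsum_cos_div_sq, ← Cl2] at hprod
    have hscale : Cl2 (2 * π * a / N) * B2 (b / N) / 4 =
        ((2 * π) ^ 2)⁻¹ * (Cl2 (2 * π * a / N) * (π ^ 2 * B2 (b / N))) := by
      field_simp
      ring
    rw [hscale, hprod, ← tsum_mul_left]
    refine tsum_congr fun p ↦ ?_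
    rw [hc, div_mul_div_comm, mul_pow _ (_ * _), mul_pow (p.1 : ℝ), mul_inv, div_eq_mul_inv]
    ring
  rw [setIntegral_congr_fun measurableSet_Ioi hintegrand, integral_const_mul, integral_complex_ofReal,
    ← integral_tsum_of_summable_integral_norm hF_int hsum]
  simp only [hF_integral, htsum]
  push_cast
  ring
end
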